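/- Let H be a k-bialgebra, projective as a k-module, A a left H-comodule algebra, and γ an A-integral for the Doi-Hopf datum (H,A,H) (with C = H the right H-module coalgebra via multiplication). Then the map φ_γ : H → A, φ_γ(h) = γ(h)(1_H), is left H-colinear, i.e. ρ_A(φ_γ(h)) = Σ h_(1) ⊗ φ_γ(h_(2)) for all h∈H; and if γ is total, then φ_γ(1_H) = 1_A, so φ_γ is a total integral in the sense of Doi. -/

import Mathlib

/-!
Both claims are specialisations of the axioms at `1 ∈ H`, which is grouplike (`Δ(1) = 1 ⊗ 1`,
`ε(1) = 1`). Condition (b) at `d = 1` reads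
`Σ h_(1) ⊗ γ(h_(2))(1) = Σ 1 · γ(h)(1)_{<-1>} ⊗ γ(h)(1)_{<0>} = ρ(γ(h)(1))`,
which is colinearity of `φ_γ`; totality at `c = 1` reads `γ(1)(1) = 1`.
-/

open TensorProduct

noncomputable section

/-- A Doi-Hopf datum `(H, A, C)`: `H` is a `k`-bialgebra, `A` is a left `H`-comodule
algebra (with coaction `ρ`), and `C` is a right `H`-module coalgebra (with action `act`). -/
structure DoiHopfDatum (k H A C : Type*) [CommRing k] [Ring H] [Bialgebra k H]
    [Ring A] [Algebra k A] [AddCommGroup C] [Module k C] [Coalgebra k C] where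
  /-- the coaction `ρ_A : A → H ⊗ A`, `ρ a = Σ a_{<-1>} ⊗ a_{<0>}` -/
  ρ : A →ₗ[k] H ⊗[k] A
  ρ_coassoc : ∀ a : A,
    (TensorProduct.assoc k H H A)
        ((TensorProduct.map (Coalgebra.comul (R := k)) LinearMap.id) (ρ a))
      = (TensorProduct.map LinearMap.id ρ) (ρ a)
  ρ_counit : ∀ a : A,
    (TensorProduct.lid k A)
        ((TensorProduct.map (Coalgebra.counit (R := k)) LinearMap.id) (ρ a)) = a
  ρ_mul : ∀ a b : A, ρ (a * b) = ρ a * ρ b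
  ρ_one : ρ 1 = 1
  /-- the right `H`-action on `C`, written `act c h = c · h` -/
  act : C →ₗ[k] H →ₗ[k] C
  act_one : ∀ c : C, act c 1 = c
  act_mul : ∀ (c : C) (g h : H), act (act c g) h = act c (g * h)
  comul_act : ∀ (c : C) (h : H),
    Coalgebra.comul (R := k) (act c h)
      = (TensorProduct.map (TensorProduct.lift act) (TensorProduct.lift act))
          ((TensorProduct.tensorTensorTensorComm k C C H H)
            (Coalgebra.comul (R := k) c ⊗ₜ[k] Coalgebra.comul (R := k) h))
  counit_act : ∀ (c : C) (h : H),
    Coalgebra.counit (R := k) (act c h)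
      = Coalgebra.counit (R := k) c * Coalgebra.counit (R := k) h

namespace DoiHopfDatum

variable {k H A C : Type*} [CommRing k] [Ring H] [Bialgebra k H]
    [Ring A] [Algebra k A] [AddCommGroup C] [Module k C] [Coalgebra k C]
variable (D : DoiHopfDatum k H A C)

/-- The action `C ⊗ H → C` as a linear map on the tensor product. -/
def actL : C ⊗[k] H →ₗ[k] C := TensorProduct.lift D.act

/-- The iterated coaction `a ↦ Σ (a_{<-2>} ⊗ a_{<-1>}) ⊗ a_{<0>}`. -/
def ρ2 : A →ₗ[k] (H ⊗[k] H) ⊗[k] A :=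
  (TensorProduct.assoc k H H A).symm.toLinearMap ∘ₗ
    (TensorProduct.map LinearMap.id D.ρ) ∘ₗ D.ρ

/-- The simultaneous action of `H ⊗ H` on `C ⊗ C`. -/
def act2 : (C ⊗[k] C) ⊗[k] (H ⊗[k] H) →ₗ[k] C ⊗[k] C :=
  (TensorProduct.map D.actL D.actL) ∘ₗ
    (TensorProduct.tensorTensorTensorComm k C C H H).toLinearMap

/-- The right `A`-action on `C ⊗ A`: `(c ⊗ b) · a = Σ c·a_{<-1>} ⊗ b·a_{<0>}`. -/
def rActCA : (C ⊗[k] A) ⊗[k] A →ₗ[k] C ⊗[k] A :=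
  (TensorProduct.map D.actL (LinearMap.mul' k A)) ∘ₗ
    (TensorProduct.tensorTensorTensorComm k C A H A).toLinearMap ∘ₗ
    (TensorProduct.map LinearMap.id D.ρ)

/-- The right-hand side of condition (a) of `V₃`:
`(c ⊗ d) ⊗ a ↦ Σ a_{<0>} * θ(c·a_{<-2>} ⊗ d·a_{<-1>})`. -/
def V3aRHS (θ : C ⊗[k] C →ₗ[k] A) : (C ⊗[k] C) ⊗[k] A →ₗ[k] A :=
  (LinearMap.mul' k A) ∘ₗ (TensorProduct.comm k A A).toLinearMap ∘ₗ
    (TensorProduct.map θ LinearMap.id) ∘ₗ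
    (TensorProduct.map D.act2 LinearMap.id) ∘ₗ
    (TensorProduct.assoc k (C ⊗[k] C) (H ⊗[k] H) A).symm.toLinearMap ∘ₗ
    (TensorProduct.map LinearMap.id D.ρ2)

/-- The left-hand side of condition (b) of `V₃`: `c ⊗ d ↦ Σ c_(1) ⊗ θ(c_(2) ⊗ d)`. -/
def V3bLHS (_D : DoiHopfDatum k H A C) (θ : C ⊗[k] C →ₗ[k] A) : C ⊗[k] C →ₗ[k] C ⊗[k] A :=
  (TensorProduct.map LinearMap.id θ) ∘ₗ
    (TensorProduct.assoc k C C C).toLinearMap ∘ₗ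
    (TensorProduct.map (Coalgebra.comul (R := k)) LinearMap.id)

/-- The right-hand side of condition (b) of `V₃`:
`c ⊗ d ↦ Σ d_(2)·θ(c ⊗ d_(1))_{<-1>} ⊗ θ(c ⊗ d_(1))_{<0>}`. -/
def V3bRHS (θ : C ⊗[k] C →ₗ[k] A) : C ⊗[k] C →ₗ[k] C ⊗[k] A :=
  (TensorProduct.map D.actL LinearMap.id) ∘ₗ
    (TensorProduct.assoc k C H A).symm.toLinearMap ∘ₗ
    (TensorProduct.comm k (H ⊗[k] A) C).toLinearMap ∘ₗ
    (TensorProduct.map D.ρ LinearMap.id) ∘ₗ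
    (TensorProduct.map θ LinearMap.id) ∘ₗ
    (TensorProduct.assoc k C C C).symm.toLinearMap ∘ₗ
    (TensorProduct.map LinearMap.id (Coalgebra.comul (R := k)))

/-- `θ : C ⊗ C → A` belongs to `V₃`. -/
def IsV3 (θ : C ⊗[k] C →ₗ[k] A) : Prop :=
  (∀ (c d : C) (a : A), θ (c ⊗ₜ[k] d) * a = D.V3aRHS θ ((c ⊗ₜ[k] d) ⊗ₜ[k] a)) ∧
    D.V3bLHS θ = D.V3bRHS θ

/-- `θ` is normalized: `Σ θ(c_(1) ⊗ c_(2)) = ε(c)1_A`. -/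
def IsNormalizedV3 (_D : DoiHopfDatum k H A C) (θ : C ⊗[k] C →ₗ[k] A) : Prop :=
  ∀ c : C, θ (Coalgebra.comul (R := k) c)
    = algebraMap k A (Coalgebra.counit (R := k) c)

/-- An `A`-integral `γ : C → Hom(C,A)` for the Doi-Hopf datum: its uncurried form
lies in `V₃`. -/
def IsAIntegral (γ : C →ₗ[k] (C →ₗ[k] A)) : Prop :=
  D.IsV3 (TensorProduct.lift γ)

/-- A total `A`-integral: a normalized `A`-integral. -/
def IsTotalAIntegral (γ : C →ₗ[k] (C →ₗ[k] A)) : Prop :=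
  D.IsAIntegral γ ∧ D.IsNormalizedV3 (TensorProduct.lift γ)

end DoiHopfDatum

/-- A right-left Doi-Hopf module over the Doi-Hopf datum `D`: a right `A`-module and
left `C`-comodule `M` satisfying `ρ_M(m·a) = Σ m_{<-1>}·a_{<-1>} ⊗ m_{<0>}·a_{<0>}`. -/
structure DHModule {k H A C : Type*} [CommRing k] [Ring H] [Bialgebra k H]
    [Ring A] [Algebra k A] [AddCommGroup C] [Module k C] [Coalgebra k C]
    (D : DoiHopfDatum k H A C) (M : Type*) [AddCommGroup M] [Module k M] where
  /-- the right `A`-action on `M` -/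
  sm : M →ₗ[k] A →ₗ[k] M
  sm_one : ∀ m : M, sm m 1 = m
  sm_mul : ∀ (m : M) (a b : A), sm (sm m a) b = sm m (a * b)
  /-- the left `C`-coaction `ρ_M : M → C ⊗ M` -/
  cρ : M →ₗ[k] C ⊗[k] M
  cρ_coassoc : ∀ m : M,
    (TensorProduct.assoc k C C M)
        ((TensorProduct.map (Coalgebra.comul (R := k)) LinearMap.id) (cρ m))
      = (TensorProduct.map LinearMap.id cρ) (cρ m)
  cρ_counit : ∀ m : M,
    (TensorProduct.lid k M)
        ((TensorProduct.map (Coalgebra.counit (R := k)) LinearMap.id) (cρ m)) = m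
  compat : ∀ (m : M) (a : A),
    cρ (sm m a)
      = (TensorProduct.map D.actL (TensorProduct.lift sm))
          ((TensorProduct.tensorTensorTensorComm k C M H A)
            (cρ m ⊗ₜ[k] D.ρ a))

namespace DoiHopfDatum

variable {k H A C : Type*} [CommRing k] [Ring H] [Bialgebra k H]
    [Ring A] [Algebra k A] [AddCommGroup C] [Module k C] [Coalgebra k C]
variable (D : DoiHopfDatum k H A C)

/-- The natural transformation attached to `θ : C ⊗ C → A`:
`ν_M (c ⊗ m) = Σ m_{<0>} · θ(c ⊗ m_{<-1>})`. -/
def nuMap (θ : C ⊗[k] C →ₗ[k] A) {M : Type*} [AddCommGroup M] [Module k M]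
    (DM : DHModule D M) : C ⊗[k] M →ₗ[k] M :=
  (TensorProduct.lift DM.sm) ∘ₗ (TensorProduct.comm k A M).toLinearMap ∘ₗ
    (TensorProduct.map θ LinearMap.id) ∘ₗ
    (TensorProduct.assoc k C C M).symm.toLinearMap ∘ₗ
    (TensorProduct.map LinearMap.id DM.cρ)

/-- The right `A`-action on `C ⊗ M`: `(c ⊗ m) · a = Σ c·a_{<-1>} ⊗ m·a_{<0>}`. -/
def actCM {M : Type*} [AddCommGroup M] [Module k M] (DM : DHModule D M) :
    (C ⊗[k] M) ⊗[k] A →ₗ[k] C ⊗[k] M :=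
  (TensorProduct.map D.actL (TensorProduct.lift DM.sm)) ∘ₗ
    (TensorProduct.tensorTensorTensorComm k C M H A).toLinearMap ∘ₗ
    (TensorProduct.map LinearMap.id D.ρ)

end DoiHopfDatum

section MulDatum

variable {k H A : Type*} [CommRing k] [Ring H] [Bialgebra k H] [Ring A] [Algebra k A]

lemma mapMul_tensorTensorTensorComm (x y : H ⊗[k] H) :
    (TensorProduct.map (TensorProduct.lift (LinearMap.mul k H))
        (TensorProduct.lift (LinearMap.mul k H)))
      ((TensorProduct.tensorTensorTensorComm k H H H H) (x ⊗ₜ[k] y)) = x * y := by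
  induction x using TensorProduct.induction_on with
  | zero => simp
  | tmul a b =>
    induction y using TensorProduct.induction_on with
    | zero => simp
    | tmul c d => simp [Algebra.TensorProduct.tmul_mul_tmul]
    | add y₁ y₂ h₁ h₂ => simp only [tmul_add, map_add, h₁, h₂, mul_add]
  | add x₁ x₂ h₁ h₂ => simp only [add_tmul, map_add, h₁, h₂, add_mul]

/-- The Doi-Hopf datum `(H, A, H)`: `A` a left `H`-comodule algebra and `C = H` the
right `H`-module coalgebra given by multiplication. -/
def DoiHopfDatum.ofComodAlg (ρ : A →ₗ[k] H ⊗[k] A)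
    (ρ_coassoc : ∀ a : A,
      (TensorProduct.assoc k H H A)
          ((TensorProduct.map (Coalgebra.comul (R := k)) LinearMap.id) (ρ a))
        = (TensorProduct.map LinearMap.id ρ) (ρ a))
    (ρ_counit : ∀ a : A,
      (TensorProduct.lid k A)
          ((TensorProduct.map (Coalgebra.counit (R := k)) LinearMap.id) (ρ a)) = a)
    (ρ_mul : ∀ a b : A, ρ (a * b) = ρ a * ρ b)
    (ρ_one : ρ 1 = 1) : DoiHopfDatum k H A H where
  ρ := ρ
  ρ_coassoc := ρ_coassoc
  ρ_counit := ρ_counit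
  ρ_mul := ρ_mul
  ρ_one := ρ_one
  act := LinearMap.mul k H
  act_one := fun c => mul_one c
  act_mul := fun c g h => mul_assoc c g h
  comul_act := fun c h => by
    rw [mapMul_tensorTensorTensorComm]
    simp
  counit_act := fun c h => by simp

end MulDatum

/-- if `H` is a `k`-projective bialgebra, `A` a left `H`-comodule algebra
and `γ` an `A`-integral for the Doi-Hopf datum `(H,A,H)`, then `φ_γ(h) = γ(h)(1_H)` is
left `H`-colinear, and if `γ` is total then `φ_γ(1_H) = 1_A`, i.e. `φ_γ` is a total
integral in the sense of Doi. -/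
theorem integral_gives_Doi_total_integral
    {k H A : Type*} [CommRing k] [Ring H] [Bialgebra k H]
    [Ring A] [Algebra k A] [Module.Projective k H]
    (ρ : A →ₗ[k] H ⊗[k] A)
    (ρ_coassoc : ∀ a : A,
      (TensorProduct.assoc k H H A)
          ((TensorProduct.map (Coalgebra.comul (R := k)) LinearMap.id) (ρ a))
        = (TensorProduct.map LinearMap.id ρ) (ρ a))
    (ρ_counit : ∀ a : A,
      (TensorProduct.lid k A)
          ((TensorProduct.map (Coalgebra.counit (R := k)) LinearMap.id) (ρ a)) = a)
    (ρ_mul : ∀ a b : A, ρ (a * b) = ρ a * ρ b)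
    (ρ_one : ρ 1 = 1)
    (γ : H →ₗ[k] (H →ₗ[k] A))
    (hγ : (DoiHopfDatum.ofComodAlg ρ ρ_coassoc ρ_counit ρ_mul ρ_one).IsAIntegral γ) :
    (∀ h : H, ρ (γ.flip 1 h)
        = (TensorProduct.map LinearMap.id (γ.flip 1)) (Coalgebra.comul (R := k) h)) ∧
    ((DoiHopfDatum.ofComodAlg ρ ρ_coassoc ρ_counit ρ_mul ρ_one).IsNormalizedV3
        (TensorProduct.lift γ) →
      γ.flip 1 1 = 1) := by
  -- Elementwise forms of the two sides of condition (b) at `h ⊗ 1`: on the left, any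
  -- `x = Δ(h)` pairs with `d = 1`; on the right, `Δ(1) = 1 ⊗ 1` and `1 · g = g`.
  have left (x : H ⊗[k] H) :
      TensorProduct.map LinearMap.id (TensorProduct.lift γ)
          (TensorProduct.assoc k H H H (x ⊗ₜ[k] (1 : H)))
        = TensorProduct.map LinearMap.id (γ.flip 1) x := by
    induction x using TensorProduct.induction_on with
    | zero => simp
    | tmul a b => simp
    | add x y hx hy => simp only [add_tmul, map_add, hx, hy]
  have right (y : H ⊗[k] A) :
      TensorProduct.map (TensorProduct.lift (LinearMap.mul k H)) LinearMap.id
          ((TensorProduct.assoc k H H A).symm ((1 : H) ⊗ₜ[k] y)) = y := by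
    induction y using TensorProduct.induction_on with
    | zero => simp
    | tmul a b => simp
    | add x y hx hy => simp only [tmul_add, map_add, hx, hy]
  refine ⟨fun h => ?_, fun hn => ?_⟩
  · have hb := LinearMap.congr_fun hγ.2 (h ⊗ₜ[k] (1 : H))
    simp only [DoiHopfDatum.V3bLHS, DoiHopfDatum.V3bRHS, DoiHopfDatum.actL,
      DoiHopfDatum.ofComodAlg, LinearMap.comp_apply, LinearEquiv.coe_coe,
      TensorProduct.map_tmul, LinearMap.id_apply, Bialgebra.comul_one,
      Algebra.TensorProduct.one_def, TensorProduct.assoc_symm_tmul,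
      TensorProduct.lift.tmul, TensorProduct.comm_tmul, left, right] at hb
    exact hb.symm
  · simpa [Algebra.TensorProduct.one_def] using hn 1
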